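/- Let α ∈ (1,2), let d ≥ 1, let a₁,…,a_d ≥ 0 be nonnegative reals and b₁,…,b_d > 0 be positive reals. Then ∫₀^∞ (Σ_{i=1}^d a_i e^{−2 b_i t})^{α/2} dt ≥ (Σ_{i=1}^d a_i / (α b_i)^{2/α})^{α/2}. -/

import Mathlib

open MeasureTheory

/-!
The reverse Minkowski inequality for an exponent `p ∈ (0, 1]` is the triangle inequality
`‖∫ G‖ ≤ ∫ ‖G‖` for the function `G = (f i ^ p)ᵢ` with values in the finite-dimensional `ℓ^(1/p)`.
With `p = α / 2` and exponentials for the `f i`, the integrals on the left are explicit.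
-/

section Minkowski

variable {ι Ω : Type*} [Fintype ι] [MeasurableSpace Ω] {μ : Measure Ω}

theorem rpow_sum_norm_integral_rpow_le_integral {E : ι → Type*} [∀ i, NormedAddCommGroup (E i)]
    [∀ i, NormedSpace ℝ (E i)] [∀ i, CompleteSpace (E i)] {r : ℝ} (hr : 1 ≤ r)
    {g : ∀ i, Ω → E i} (hg : ∀ i, Integrable (g i) μ) :
    (∑ i, ‖∫ x, g i x ∂μ‖ ^ r) ^ (1 / r) ≤ ∫ x, (∑ i, ‖g i x‖ ^ r) ^ (1 / r) ∂μ := by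
  have : Fact (1 ≤ ENNReal.ofReal r) := ⟨ENNReal.one_le_ofReal.2 hr⟩
  have hr₀ : 0 < r := zero_lt_one.trans_le hr
  have htoReal : (ENNReal.ofReal r).toReal = r := ENNReal.toReal_ofReal hr₀.le
  have hnorm (v : PiLp (ENNReal.ofReal r) E) : ‖v‖ = (∑ i, ‖v i‖ ^ r) ^ (1 / r) := by
    rw [PiLp.norm_eq_sum (htoReal.symm ▸ hr₀), htoReal]
  let G (x : Ω) : PiLp (ENNReal.ofReal r) E := WithLp.toLp _ fun i ↦ g i x
  have htriangle : ‖∫ x, G x ∂μ‖ ≤ ∫ x, ‖G x‖ ∂μ := norm_integral_le_integral_norm G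
  have heval (i : ι) : (∫ x, G x ∂μ) i = ∫ x, g i x ∂μ := eval_integral_piLp hg i
  simpa only [hnorm, heval] using htriangle

theorem rpow_sum_integral_rpow_le_integral_sum_rpow {p : ℝ} (hp₀ : 0 < p) (hp₁ : p ≤ 1)
    {f : ι → Ω → ℝ} (hf : ∀ i, 0 ≤ᵐ[μ] f i) (hfp : ∀ i, Integrable (fun x ↦ f i x ^ p) μ) :
    (∑ i, (∫ x, f i x ^ p ∂μ) ^ (1 / p)) ^ p ≤ ∫ x, (∑ i, f i x) ^ p ∂μ := by
  have hnorm_integral (i : ι) : ‖∫ x, f i x ^ p ∂μ‖ = ∫ x, f i x ^ p ∂μ :=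
    Real.norm_of_nonneg <| integral_nonneg_of_ae <| (hf i).mono fun _ hx ↦ Real.rpow_nonneg hx p
  have hnorm_rpow : ∀ᵐ x ∂μ, (∑ i, ‖f i x ^ p‖ ^ (1 / p)) ^ p = (∑ i, f i x) ^ p := by
    filter_upwards [ae_all_iff.2 hf] with x hx
    congr! 2 with i
    rw [Real.norm_of_nonneg (Real.rpow_nonneg (hx i) p), one_div, Real.rpow_rpow_inv (hx i) hp₀.ne']
  calc (∑ i, (∫ x, f i x ^ p ∂μ) ^ (1 / p)) ^ p
      ≤ ∫ x, (∑ i, ‖f i x ^ p‖ ^ (1 / p)) ^ p ∂μ := by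
        simpa only [hnorm_integral, one_div_one_div] using
          rpow_sum_norm_integral_rpow_le_integral ((one_le_div hp₀).2 hp₁) hfp
    _ = ∫ x, (∑ i, f i x) ^ p ∂μ := integral_congr_ae hnorm_rpow

end Minkowski

section Exponential

variable {a k p : ℝ}

theorem mul_exp_rpow (ha : 0 ≤ a) (t : ℝ) :
    (a * Real.exp (k * t)) ^ p = a ^ p * Real.exp (p * k * t) := by
  rw [Real.mul_rpow ha (Real.exp_pos _).le, ← Real.exp_mul, mul_comm (k * t), mul_assoc]

theorem integrableOn_mul_exp_rpow_Ioi (ha : 0 ≤ a) (hpk : p * k < 0) (c : ℝ) :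
    IntegrableOn (fun t ↦ (a * Real.exp (k * t)) ^ p) (Set.Ioi c) := by
  simpa only [mul_exp_rpow ha, IntegrableOn] using
    (integrableOn_exp_mul_Ioi hpk c).const_mul (a ^ p)

theorem integral_mul_exp_rpow_Ioi (ha : 0 ≤ a) (hpk : p * k < 0) (c : ℝ) :
    ∫ t in Set.Ioi c, (a * Real.exp (k * t)) ^ p = -(a * Real.exp (k * c)) ^ p / (p * k) := by
  simp only [mul_exp_rpow ha, integral_const_mul, integral_exp_mul_Ioi hpk, mul_div_assoc', mul_neg]

end Exponential

theorem stmt_1_general {ι : Type*} [Fintype ι] {α : ℝ} (hα : α ∈ Set.Ioc (0 : ℝ) 2)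
    {a b : ι → ℝ} (ha : ∀ i, 0 ≤ a i) (hb : ∀ i, 0 < b i) :
    (∑ i, a i / (α * b i) ^ (2 / α)) ^ (α / 2)
      ≤ ∫ t in Set.Ioi (0 : ℝ), (∑ i, a i * Real.exp (-2 * b i * t)) ^ (α / 2) := by
  obtain ⟨hα₀, hα₂⟩ := hα
  have hαb (i : ι) : 0 < α * b i := mul_pos hα₀ (hb i)
  have hrate (i : ι) : α / 2 * (-2 * b i) = -(α * b i) := by ring
  have hneg (i : ι) : α / 2 * (-2 * b i) < 0 := hrate i ▸ neg_lt_zero.2 (hαb i)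
  have hterm (i : ι) : a i / (α * b i) ^ (2 / α) =
      (∫ t in Set.Ioi (0 : ℝ), (a i * Real.exp (-2 * b i * t)) ^ (α / 2)) ^ (1 / (α / 2)) := by
    rw [integral_mul_exp_rpow_Ioi (ha i) (hneg i), hrate, neg_div_neg_eq, mul_zero, Real.exp_zero,
      mul_one, Real.div_rpow (Real.rpow_nonneg (ha i) _) (hαb i).le, one_div,
      Real.rpow_rpow_inv (ha i) (by positivity), inv_div]
  simp only [hterm]
  exact rpow_sum_integral_rpow_le_integral_sum_rpow (half_pos hα₀) (by linarith)
    (fun i ↦ .of_forall fun t ↦ mul_nonneg (ha i) (Real.exp_pos _).le)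
    fun i ↦ integrableOn_mul_exp_rpow_Ioi (ha i) (hneg i) 0

/-- For `α ∈ (1,2)`, `d ≥ 1`, nonnegative `a i` and positive `b i`,
`∫₀^∞ (∑ i, a i e^{−2 b i t})^{α/2} dt ≥ (∑ i, a i / (α b i)^{2/α})^{α/2}`. -/
theorem stmt_1 (α : ℝ) (hα : α ∈ Set.Ioo (1:ℝ) 2) (d : ℕ) (hd : 1 ≤ d)
    (a b : Fin d → ℝ) (ha : ∀ i, 0 ≤ a i) (hb : ∀ i, 0 < b i) :
    (∑ i, a i / (α * b i) ^ (2/α)) ^ (α/2)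
      ≤ ∫ t in Set.Ioi (0:ℝ), (∑ i, a i * Real.exp (-2 * b i * t)) ^ (α/2) :=
  stmt_1_general ⟨zero_lt_one.trans hα.1, hα.2.le⟩ ha hb
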